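/- (Local Morrey oscillation estimate) Let $n\ge2$, $\delta\in(0,n]$, and $p\in(\delta,\infty)$. There is a constant $c=c(\delta,n,p)$ such that for every $x\in\mathbb{R}^n$, $r>0$, every $u\in C^1(B(x,2r))$, and every $y\in B(x,r)$, $|u(x)-u(y)| \le c\,r\Big(\frac{1}{|B(x,2r)|^{\delta/n}}\int_{B(x,2r)}|\nabla u(v)|^p\,d\mathcal{H}^{\delta}_\infty\Big)^{1/p}$. -/

import Mathlib

open MeasureTheory Metric Set ENNReal

/-- δ-dimensional Hausdorff content via countable ball coverings. -/
noncomputable def hc (n : ℕ) (δ : ℝ) (E : Set (EuclideanSpace ℝ (Fin n))) : ℝ≥0∞ :=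
  ⨅ (c : ℕ → EuclideanSpace ℝ (Fin n)) (r : ℕ → ℝ) (_ : ∀ i, 0 < r i)
    (_ : E ⊆ ⋃ i, ball (c i) (r i)), ∑' i, ENNReal.ofReal (r i ^ δ)

/-- Choquet integral of a nonnegative function over Ω with respect to `hc n δ`. -/
noncomputable def choquet (n : ℕ) (δ : ℝ) (Ω : Set (EuclideanSpace ℝ (Fin n)))
    (f : EuclideanSpace ℝ (Fin n) → ℝ≥0∞) : ℝ≥0∞ :=
  ∫⁻ t in Ioi (0:ℝ), hc n δ {x | x ∈ Ω ∧ ENNReal.ofReal t < f x}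

/-!
The proof is Morrey's classical argument run with the exponent `q = p n / δ > n`. Two facts link
the Hausdorff content to Lebesgue integrals. Since `δ ≤ n`, summing volumes over a covering shows
that Lebesgue measure is at most a multiple of the `n / δ` power of the content. The content of the
superlevel sets is antitone in the level, so the layer cake formula turns this into an embedding:
`∫ g ^ (n / δ)` is at most a multiple of the `n / δ` power of the Choquet integral of `g`. For
`g = ‖∇u‖ ^ p` the Choquet integral thus controls the `L ^ q` norm of the gradient.

For Morrey's estimate itself, `u w - u z` is an integral of `∇u` along the segment from `z`
to `w`. Average over `w`: after Jensen's inequality, the substitution `w ↦ z + t • (w - z)` costs a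
factor `t ^ (-(n / q))`, which is integrable over `(0, 1]` because `q > n`. Comparing the values at
two points with the average of `u` finishes the proof.
-/

theorem rpow_eq_rpow_sub_one_mul (a : ℝ≥0∞) {s : ℝ} (hs : 1 ≤ s) : a ^ s = a ^ (s - 1) * a := by
  simpa using ENNReal.rpow_add_of_nonneg (x := a) (s - 1) 1 (by linarith) zero_le_one

theorem tsum_rpow_le_rpow_tsum {ι : Type*} (a : ι → ℝ≥0∞) {s : ℝ} (hs : 1 ≤ s) :
    ∑' i, a i ^ s ≤ (∑' i, a i) ^ s := by
  calc ∑' i, a i ^ s ≤ ∑' i, (∑' j, a j) ^ (s - 1) * a i := by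
        refine ENNReal.tsum_le_tsum fun i => ?_
        rw [rpow_eq_rpow_sub_one_mul _ hs]
        gcongr
        exact ENNReal.le_tsum i
    _ = (∑' i, a i) ^ s := by rw [ENNReal.tsum_mul_left, ← rpow_eq_rpow_sub_one_mul _ hs]

theorem ofReal_mul_le_lintegral_Ioi_of_antitoneOn {F : ℝ → ℝ≥0∞} (hF : AntitoneOn F (Ioi 0))
    {t : ℝ} (ht : 0 < t) : ENNReal.ofReal t * F t ≤ ∫⁻ τ in Ioi (0 : ℝ), F τ :=
  calc ENNReal.ofReal t * F t = ∫⁻ _ in Ioc 0 t, F t := by simp [mul_comm]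
    _ ≤ ∫⁻ τ in Ioc 0 t, F τ :=
        setLIntegral_mono' measurableSet_Ioc fun _ hτ => hF hτ.1 ht hτ.2
    _ ≤ ∫⁻ τ in Ioi (0 : ℝ), F τ := lintegral_mono_set Ioc_subset_Ioi_self

theorem lintegral_Ioi_rpow_mul_le_rpow_of_antitoneOn {F : ℝ → ℝ≥0∞} (hF : AntitoneOn F (Ioi 0))
    {s : ℝ} (hs : 1 ≤ s) :
    ∫⁻ t in Ioi (0 : ℝ), F t ^ s * ENNReal.ofReal (t ^ (s - 1)) ≤
      (∫⁻ t in Ioi (0 : ℝ), F t) ^ s := by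
  set I := ∫⁻ t in Ioi (0 : ℝ), F t
  calc ∫⁻ t in Ioi (0 : ℝ), F t ^ s * ENNReal.ofReal (t ^ (s - 1))
      = ∫⁻ t in Ioi (0 : ℝ), (ENNReal.ofReal t * F t) ^ (s - 1) * F t := by
        refine setLIntegral_congr_fun measurableSet_Ioi fun t (ht : 0 < t) => ?_
        rw [rpow_eq_rpow_sub_one_mul _ hs, ENNReal.mul_rpow_of_nonneg _ _ (by linarith),
          ENNReal.ofReal_rpow_of_nonneg ht.le (by linarith)]
        ring
    _ ≤ ∫⁻ t in Ioi (0 : ℝ), I ^ (s - 1) * F t := by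
        refine setLIntegral_mono' measurableSet_Ioi fun t ht => ?_
        gcongr
        exact ofReal_mul_le_lintegral_Ioi_of_antitoneOn hF ht
    _ = I ^ s := by
        rw [lintegral_const_mul'' _ (aemeasurable_restrict_of_antitoneOn measurableSet_Ioi hF),
          ← rpow_eq_rpow_sub_one_mul _ hs]

theorem hc_mono (n : ℕ) (δ : ℝ) : Monotone (hc n δ) := fun E F hEF => by
  unfold hc
  gcongr with c r _
  exact iInf_mono' fun h => ⟨hEF.trans h, le_rfl⟩

section Content

variable {n : ℕ} {δ : ℝ}

theorem volume_le_tsum_rpow_of_subset_iUnion_ball (hδ : 0 < δ) (hδn : δ ≤ n)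
    {E : Set (EuclideanSpace ℝ (Fin n))} {c : ℕ → EuclideanSpace ℝ (Fin n)} {r : ℕ → ℝ}
    (hr : ∀ i, 0 < r i) (hE : E ⊆ ⋃ i, ball (c i) (r i)) :
    volume E ≤ (∑' i, ENNReal.ofReal (r i ^ δ)) ^ ((n : ℝ) / δ) *
      volume (ball (0 : EuclideanSpace ℝ (Fin n)) 1) := by
  have hs : 1 ≤ (n : ℝ) / δ := (one_le_div hδ).2 hδn
  calc volume E ≤ ∑' i, volume (ball (c i) (r i)) :=
        (measure_mono hE).trans (measure_iUnion_le _)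
    _ = (∑' i, ENNReal.ofReal (r i ^ δ) ^ ((n : ℝ) / δ)) *
          volume (ball (0 : EuclideanSpace ℝ (Fin n)) 1) := by
        rw [← ENNReal.tsum_mul_right]
        refine tsum_congr fun i => ?_
        rw [Measure.addHaar_ball_of_pos _ _ (hr i), ENNReal.ofReal_rpow_of_nonneg
          (Real.rpow_nonneg (hr i).le _) (by linarith), ← Real.rpow_mul (hr i).le,
          mul_div_cancel₀ _ hδ.ne', Real.rpow_natCast, finrank_euclideanSpace_fin]
    _ ≤ _ := by
        gcongr
        exact tsum_rpow_le_rpow_tsum _ hs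

theorem volume_le_hc_rpow_mul (hδ : 0 < δ) (hδn : δ ≤ n) (E : Set (EuclideanSpace ℝ (Fin n))) :
    volume E ≤ hc n δ E ^ ((n : ℝ) / δ) * volume (ball (0 : EuclideanSpace ℝ (Fin n)) 1) := by
  have hs : 0 < (n : ℝ) / δ := zero_lt_one.trans_le ((one_le_div hδ).2 hδn)
  have hω0 : volume (ball (0 : EuclideanSpace ℝ (Fin n)) 1) ≠ 0 :=
    (measure_ball_pos _ _ one_pos).ne'
  have hωt : volume (ball (0 : EuclideanSpace ℝ (Fin n)) 1) ≠ ⊤ := measure_ball_lt_top.ne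
  rw [← ENNReal.div_le_iff hω0 hωt, ← ENNReal.rpow_inv_le_iff hs]
  refine le_iInf₂ fun c r => le_iInf₂ fun hr hE => ?_
  rw [ENNReal.rpow_inv_le_iff hs, ENNReal.div_le_iff hω0 hωt]
  exact volume_le_tsum_rpow_of_subset_iUnion_ball hδ hδn hr hE

variable {Ω : Set (EuclideanSpace ℝ (Fin n))} {g : EuclideanSpace ℝ (Fin n) → ℝ}

theorem setLIntegral_rpow_le_choquet_rpow (hδ : 0 < δ) (hδn : δ ≤ n)
    (hg : AEMeasurable g (volume.restrict Ω)) (hg0 : 0 ≤ᵐ[volume.restrict Ω] g) :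
    ∫⁻ v in Ω, ENNReal.ofReal (g v ^ ((n : ℝ) / δ)) ≤
      ENNReal.ofReal (n / δ) * volume (ball (0 : EuclideanSpace ℝ (Fin n)) 1) *
        choquet n δ Ω (fun v => ENNReal.ofReal (g v)) ^ ((n : ℝ) / δ) := by
  have hs : 1 ≤ (n : ℝ) / δ := (one_le_div hδ).2 hδn
  set s : ℝ := (n : ℝ) / δ
  set ω := volume (ball (0 : EuclideanSpace ℝ (Fin n)) 1)
  let F : ℝ → ℝ≥0∞ := fun t => hc n δ {v | v ∈ Ω ∧ ENNReal.ofReal t < ENNReal.ofReal (g v)}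
  have hF : Antitone F := fun t t' htt' =>
    hc_mono n δ fun v hv => ⟨hv.1, (ENNReal.ofReal_le_ofReal htt').trans_lt hv.2⟩
  have hvol : ∀ t ∈ Ioi (0 : ℝ), volume.restrict Ω {v | t < g v} ≤ F t ^ s * ω := fun t ht => by
    have hlevel : {v | t < g v} ∩ Ω =
        {v | v ∈ Ω ∧ ENNReal.ofReal t < ENNReal.ofReal (g v)} := by
      ext v
      simp [ENNReal.ofReal_lt_ofReal_iff_of_nonneg (le_of_lt ht), and_comm]
    rw [Measure.restrict_apply₀ (nullMeasurableSet_lt aemeasurable_const hg), hlevel]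
    exact volume_le_hc_rpow_mul hδ hδn _
  calc ∫⁻ v in Ω, ENNReal.ofReal (g v ^ s)
      = ENNReal.ofReal s * ∫⁻ t in Ioi (0 : ℝ), volume.restrict Ω {v | t < g v} *
          ENNReal.ofReal (t ^ (s - 1)) :=
        lintegral_rpow_eq_lintegral_meas_lt_mul _ hg0 hg (by linarith)
    _ ≤ ENNReal.ofReal s * ∫⁻ t in Ioi (0 : ℝ), ω * (F t ^ s * ENNReal.ofReal (t ^ (s - 1))) := by
        gcongr ENNReal.ofReal s * ?_
        refine setLIntegral_mono' measurableSet_Ioi fun t ht => ?_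
        rw [← mul_assoc, mul_comm ω]
        gcongr
        exact hvol t ht
    _ ≤ ENNReal.ofReal s * ω * choquet n δ Ω (fun v => ENNReal.ofReal (g v)) ^ s := by
        rw [lintegral_const_mul' _ _ measure_ball_lt_top.ne, mul_assoc]
        gcongr
        exact lintegral_Ioi_rpow_mul_le_rpow_of_antitoneOn (hF.antitoneOn _) hs

theorem setLAverage_rpow_le_choquet_div_rpow (hδ : 0 < δ) (hδn : δ ≤ n)
    (hg : AEMeasurable g (volume.restrict Ω)) (hg0 : 0 ≤ᵐ[volume.restrict Ω] g) :
    ⨍⁻ v in Ω, ENNReal.ofReal (g v ^ ((n : ℝ) / δ)) ∂volume ≤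
      ENNReal.ofReal (n / δ) * volume (ball (0 : EuclideanSpace ℝ (Fin n)) 1) *
        (choquet n δ Ω (fun v => ENNReal.ofReal (g v)) / volume Ω ^ (δ / (n : ℝ))) ^
          ((n : ℝ) / δ) := by
  have hn : 0 < (n : ℝ) := hδ.trans_le hδn
  have hvol : (volume Ω ^ (δ / (n : ℝ))) ^ ((n : ℝ) / δ) = volume Ω := by
    rw [← ENNReal.rpow_mul, div_mul_div_cancel₀ hn.ne', div_self hδ.ne', ENNReal.rpow_one]
  rw [setLAverage_eq, ENNReal.div_rpow_of_nonneg _ _ (by positivity), hvol, ← mul_div_assoc]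
  gcongr
  exact setLIntegral_rpow_le_choquet_rpow hδ hδn hg hg0

theorem rpow_setLAverage_enorm_rpow_le_choquet {G : Type*} [NormedAddCommGroup G] {p : ℝ}
    (hδ : 0 < δ) (hδn : δ ≤ n) (hp : 0 < p) {f : EuclideanSpace ℝ (Fin n) → G}
    (hf : AEStronglyMeasurable f (volume.restrict Ω)) :
    (⨍⁻ v in Ω, ‖f v‖ₑ ^ (p * (n / δ)) ∂volume) ^ (1 / (p * (n / δ))) ≤
      (ENNReal.ofReal (n / δ) * volume (ball (0 : EuclideanSpace ℝ (Fin n)) 1)) ^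
          (1 / (p * (n / δ))) *
        (choquet n δ Ω (fun v => ENNReal.ofReal (‖f v‖ ^ p)) / volume Ω ^ (δ / (n : ℝ))) ^
          (1 / p) := by
  have hn : 0 < (n : ℝ) := hδ.trans_le hδn
  have hpower : ∀ v, ‖f v‖ₑ ^ (p * (n / δ)) = ENNReal.ofReal ((‖f v‖ ^ p) ^ ((n : ℝ) / δ)) := by
    intro v
    rw [← ofReal_norm, ENNReal.ofReal_rpow_of_nonneg (norm_nonneg _) (by positivity),
      Real.rpow_mul (norm_nonneg _)]
  have hexp : (n : ℝ) / δ * (1 / (p * (n / δ))) = 1 / p := by field_simp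
  simp only [hpower]
  grw [setLAverage_rpow_le_choquet_div_rpow hδ hδn (hf.norm.aemeasurable.pow_const p)
    (Filter.Eventually.of_forall fun v => by positivity)]
  rw [ENNReal.mul_rpow_of_nonneg _ _ (by positivity), ← ENNReal.rpow_mul, hexp]

end Content

theorem lintegral_Ioc_rpow_neg {a : ℝ} (ha : a < 1) :
    ∫⁻ t in Ioc (0 : ℝ) 1, ENNReal.ofReal (t ^ (-a)) = ENNReal.ofReal (1 - a)⁻¹ := by
  have hint : IntegrableOn (fun t : ℝ => t ^ (-a)) (Ioc 0 1) :=
    (intervalIntegrable_iff_integrableOn_Ioc_of_le zero_le_one).1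
      (intervalIntegral.intervalIntegrable_rpow' (by linarith))
  have hnonneg : 0 ≤ᵐ[volume.restrict (Ioc (0 : ℝ) 1)] fun t => t ^ (-a) := by
    filter_upwards [ae_restrict_mem measurableSet_Ioc] with t ht
    exact Real.rpow_nonneg ht.1.le _
  rw [← ofReal_integral_eq_lintegral_ofReal hint hnonneg,
    ← intervalIntegral.integral_of_le zero_le_one, integral_rpow (Or.inl (by linarith)),
    Real.one_rpow, Real.zero_rpow (by linarith), sub_zero, one_div, neg_add_eq_sub]

theorem laverage_le_rpow_laverage_rpow {α : Type*} [MeasurableSpace α] (μ : Measure α)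
    {f : α → ℝ≥0∞} (hf : AEMeasurable f μ) {q : ℝ} (hq : 1 ≤ q) :
    ⨍⁻ w, f w ∂μ ≤ (⨍⁻ w, f w ^ q ∂μ) ^ (1 / q) := by
  have hmass : ((μ univ)⁻¹ • μ) univ ^ (1 - 1 / q) ≤ 1 := by
    refine ENNReal.rpow_le_one ?_ (sub_nonneg.2 ((div_le_one (by linarith)).2 hq))
    simp [ENNReal.inv_mul_le_one]
  have hpower : ⨍⁻ w, f w ∂μ ≤
      (⨍⁻ w, f w ^ q ∂μ) ^ (1 / q) * ((μ univ)⁻¹ • μ) univ ^ (1 - 1 / q) := by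
    simpa [eLpNorm', laverage] using eLpNorm'_le_eLpNorm'_mul_rpow_measure_univ one_pos hq
      (hf.smul_measure (μ univ)⁻¹).aestronglyMeasurable
  exact hpower.trans (mul_le_of_le_one_right' hmass)

theorem ediam_ball_le {X : Type*} [PseudoMetricSpace X] (x : X) (r : ℝ) :
    ediam (ball x r) ≤ 2 * ENNReal.ofReal r := by
  rw [← eball_ofReal]
  exact ediam_eball_le

section Morrey

variable {E F : Type*} [NormedAddCommGroup E] [NormedSpace ℝ E] [NormedAddCommGroup F]
  [NormedSpace ℝ F] {B : Set E} {u : E → F} {z : E}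

theorem enorm_sub_le_lintegral_fderivWithin_of_starConvex (hBz : StarConvex ℝ z B)
    (hu : ContDiffOn ℝ 1 u B) {w : E} (hw : w ∈ B) :
    ‖u w - u z‖ₑ ≤
      (∫⁻ t in Ioc (0 : ℝ) 1, ‖fderivWithin ℝ u B (z + t • (w - z))‖ₑ) * ‖w - z‖ₑ := by
  have hmem : MapsTo (fun t : ℝ => z + t • (w - z)) (Icc 0 1) B := fun t ht =>
    hBz.add_smul_sub_mem hw ht.1 ht.2
  have hpath : ContDiffOn ℝ 1 (fun t : ℝ => u (z + t • (w - z))) (Icc 0 1) :=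
    hu.comp (by fun_prop) hmem
  have hderiv : ∀ t ∈ Icc (0 : ℝ) 1, derivWithin (fun t : ℝ => u (z + t • (w - z))) (Icc 0 1) t =
      fderivWithin ℝ u B (z + t • (w - z)) (w - z) := fun t ht => by
    have hline : HasDerivWithinAt (fun t : ℝ => z + t • (w - z)) (w - z) (Icc 0 1) t := by
      simpa using ((hasDerivWithinAt_id t _).smul_const (w - z)).const_add z
    exact ((hu.differentiableOn one_ne_zero _ (hmem ht)).hasFDerivWithinAt.comp_hasDerivWithinAt
      t hline hmem).derivWithin (uniqueDiffOn_Icc zero_lt_one t ht)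
  calc ‖u w - u z‖ₑ
      ≤ ∫⁻ t in Icc 0 1, ‖derivWithin (fun t : ℝ => u (z + t • (w - z))) (Icc 0 1) t‖ₑ := by
        simpa using enorm_sub_le_lintegral_derivWithin_Icc_of_contDiffOn_Icc hpath zero_le_one
    _ ≤ ∫⁻ t in Icc (0 : ℝ) 1, ‖fderivWithin ℝ u B (z + t • (w - z))‖ₑ * ‖w - z‖ₑ := by
        refine setLIntegral_mono' measurableSet_Icc fun t ht => ?_
        rw [hderiv t ht]
        exact ContinuousLinearMap.le_opENorm _ _
    _ = (∫⁻ t in Ioc (0 : ℝ) 1, ‖fderivWithin ℝ u B (z + t • (w - z))‖ₑ) * ‖w - z‖ₑ := by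
        rw [lintegral_mul_const' _ _ enorm_ne_top, restrict_Ioc_eq_restrict_Icc]

variable [MeasurableSpace E] [BorelSpace E]

theorem aemeasurable_prod_comp_add_smul_sub [SecondCountableTopology E] (ν : Measure E) [SFinite ν]
    (hB : MeasurableSet B) (hBz : StarConvex ℝ z B) {f : E → ℝ≥0∞} (hf : ContinuousOn f B) :
    AEMeasurable (fun x : E × ℝ => f (z + x.2 • (x.1 - z)))
      ((ν.restrict B).prod (volume.restrict (Ioc 0 1))) := by
  rw [Measure.prod_restrict]
  refine ContinuousOn.aemeasurable ?_ (hB.prod measurableSet_Ioc)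
  exact hf.comp (by fun_prop) fun x hx => hBz.add_smul_sub_mem hx.1 hx.2.1.le hx.2.2

variable [FiniteDimensional ℝ E] (μ : Measure E) [μ.IsAddHaarMeasure]

theorem setLAverage_comp_add_smul_sub_le (hB : MeasurableSet B) (hBz : StarConvex ℝ z B)
    (f : E → ℝ≥0∞) {t : ℝ} (ht : t ∈ Ioc (0 : ℝ) 1) :
    ⨍⁻ w in B, f (z + t • (w - z)) ∂μ ≤
      ENNReal.ofReal (t ^ (-(Module.finrank ℝ E : ℝ))) * ⨍⁻ w in B, f w ∂μ := by
  set d := Module.finrank ℝ E with hd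
  have htd : 0 < t ^ d := pow_pos ht.1 d
  have hderiv : ∀ w ∈ B, HasFDerivWithinAt (fun w => z + t • (w - z))
      (t • ContinuousLinearMap.id ℝ E) B w := fun w _ =>
    (((hasFDerivWithinAt_id w B).sub_const z).const_smul t).const_add z
  have hinj : InjOn (fun w => z + t • (w - z)) B := fun v _ w _ h => by
    simpa [ht.1.ne'] using h
  have himage : (fun w => z + t • (w - z)) '' B ⊆ B :=
    image_subset_iff.2 fun w hw => hBz.add_smul_sub_mem hw ht.1.le ht.2
  have hdet : |(t • ContinuousLinearMap.id ℝ E).det| = t ^ d := by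
    simp [ContinuousLinearMap.det, LinearMap.det_smul, abs_of_pos ht.1, hd]
  have hscale : ENNReal.ofReal (t ^ d) * ∫⁻ w in B, f (z + t • (w - z)) ∂μ ≤ ∫⁻ w in B, f w ∂μ := by
    rw [← lintegral_const_mul' _ _ ENNReal.ofReal_ne_top, ← hdet,
      ← lintegral_image_eq_lintegral_abs_det_fderiv_mul μ hB hderiv hinj f]
    exact lintegral_mono_set himage
  rw [setLAverage_eq, setLAverage_eq, ← mul_div_assoc, Real.rpow_neg ht.1.le, Real.rpow_natCast,
    ENNReal.ofReal_inv_of_pos htd]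
  gcongr
  rwa [mul_comm, ← div_eq_mul_inv,
    ENNReal.le_div_iff_mul_le (.inl (by simpa using htd)) (.inl ENNReal.ofReal_ne_top), mul_comm]

theorem setLAverage_comp_add_smul_sub_le_rpow (hB : MeasurableSet B) (hBz : StarConvex ℝ z B)
    {f : E → ℝ≥0∞} (hf : ContinuousOn f B) {q : ℝ} (hq : 1 ≤ q) {t : ℝ}
    (ht : t ∈ Ioc (0 : ℝ) 1) :
    ⨍⁻ w in B, f (z + t • (w - z)) ∂μ ≤
      ENNReal.ofReal (t ^ (-(Module.finrank ℝ E / q))) * (⨍⁻ w in B, f w ^ q ∂μ) ^ (1 / q) := by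
  have hcomp : AEMeasurable (fun w => f (z + t • (w - z))) (μ.restrict B) :=
    (hf.comp (by fun_prop) fun w hw => hBz.add_smul_sub_mem hw ht.1.le ht.2).aemeasurable hB
  calc ⨍⁻ w in B, f (z + t • (w - z)) ∂μ
      ≤ (⨍⁻ w in B, f (z + t • (w - z)) ^ q ∂μ) ^ (1 / q) :=
        laverage_le_rpow_laverage_rpow _ hcomp hq
    _ ≤ (ENNReal.ofReal (t ^ (-(Module.finrank ℝ E : ℝ))) * ⨍⁻ w in B, f w ^ q ∂μ) ^ (1 / q) := by
        gcongr
        exact setLAverage_comp_add_smul_sub_le μ hB hBz (fun w => f w ^ q) ht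
    _ = _ := by
        rw [ENNReal.mul_rpow_of_nonneg _ _ (by positivity),
          ENNReal.ofReal_rpow_of_nonneg (Real.rpow_nonneg ht.1.le _) (by positivity),
          ← Real.rpow_mul ht.1.le]
        congr 3
        ring

theorem setLAverage_lintegral_comp_add_smul_sub_le (hB : MeasurableSet B)
    (hBz : StarConvex ℝ z B) {f : E → ℝ≥0∞} (hf : ContinuousOn f B) {q : ℝ} (hq : 1 ≤ q)
    (hdq : Module.finrank ℝ E < q) :
    ⨍⁻ w in B, (∫⁻ t in Ioc (0 : ℝ) 1, f (z + t • (w - z))) ∂μ ≤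
      ENNReal.ofReal (1 - Module.finrank ℝ E / q)⁻¹ * (⨍⁻ w in B, f w ^ q ∂μ) ^ (1 / q) := by
  have hswap : ⨍⁻ w in B, (∫⁻ t in Ioc (0 : ℝ) 1, f (z + t • (w - z))) ∂μ =
      ∫⁻ t in Ioc (0 : ℝ) 1, (⨍⁻ w in B, f (z + t • (w - z)) ∂μ) :=
    lintegral_lintegral_swap ((aemeasurable_prod_comp_add_smul_sub μ hB hBz hf).mono_ac
      (Measure.smul_absolutelyContinuous.prod Measure.AbsolutelyContinuous.rfl))
  rw [hswap, ← lintegral_Ioc_rpow_neg ((div_lt_one (by linarith)).2 hdq),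
    ← lintegral_mul_const _ (by fun_prop)]
  exact setLIntegral_mono' measurableSet_Ioc fun t ht =>
    setLAverage_comp_add_smul_sub_le_rpow μ hB hBz hf hq ht

theorem setLAverage_enorm_sub_le_of_starConvex (hB : IsOpen B) (hBz : StarConvex ℝ z B)
    (hz : z ∈ B) (hu : ContDiffOn ℝ 1 u B) {q : ℝ} (hq : 1 ≤ q) (hdq : Module.finrank ℝ E < q) :
    ⨍⁻ w in B, ‖u w - u z‖ₑ ∂μ ≤
      ENNReal.ofReal (1 - Module.finrank ℝ E / q)⁻¹ * ediam B *
        (⨍⁻ w in B, ‖fderivWithin ℝ u B w‖ₑ ^ q ∂μ) ^ (1 / q) := by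
  set f : E → ℝ≥0∞ := fun w => ‖fderivWithin ℝ u B w‖ₑ
  have hf : ContinuousOn f B := (hu.continuousOn_fderivWithin hB.uniqueDiffOn le_rfl).enorm
  have hsegment : ∀ w ∈ B, ‖u w - u z‖ₑ ≤
      (∫⁻ t in Ioc (0 : ℝ) 1, f (z + t • (w - z))) * ediam B := fun w hw => by
    grw [enorm_sub_le_lintegral_fderivWithin_of_starConvex hBz hu hw, ← edist_eq_enorm_sub,
      edist_le_ediam_of_mem hw hz]
  have hmeas : AEMeasurable (fun w => ∫⁻ t in Ioc (0 : ℝ) 1, f (z + t • (w - z))) (μ.restrict B) :=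
    (aemeasurable_prod_comp_add_smul_sub μ hB.measurableSet hBz hf).lintegral_prod_right'
  calc ⨍⁻ w in B, ‖u w - u z‖ₑ ∂μ
      ≤ ⨍⁻ w in B, ((∫⁻ t in Ioc (0 : ℝ) 1, f (z + t • (w - z))) * ediam B) ∂μ :=
        lintegral_mono_ae
          (Measure.ae_smul_measure (ae_restrict_of_forall_mem hB.measurableSet hsegment) _)
    _ = (⨍⁻ w in B, (∫⁻ t in Ioc (0 : ℝ) 1, f (z + t • (w - z))) ∂μ) * ediam B :=
        lintegral_mul_const'' _ (hmeas.smul_measure _)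
    _ ≤ _ := by
        grw [setLAverage_lintegral_comp_add_smul_sub_le μ hB.measurableSet hBz hf hq hdq]
        exact le_of_eq (mul_right_comm _ _ _)

theorem enorm_sub_le_setLAverage_of_convex (hB : IsOpen B) (hBc : Convex ℝ B) (hμB : μ B ≠ ⊤)
    (hu : ContDiffOn ℝ 1 u B) {q : ℝ} (hq : 1 ≤ q) (hdq : Module.finrank ℝ E < q)
    {x y : E} (hx : x ∈ B) (hy : y ∈ B) :
    ‖u x - u y‖ₑ ≤
      2 * ENNReal.ofReal (1 - Module.finrank ℝ E / q)⁻¹ * ediam B *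
        (⨍⁻ w in B, ‖fderivWithin ℝ u B w‖ₑ ^ q ∂μ) ^ (1 / q) := by
  have hmeas : AEMeasurable (fun w => ‖u w - u x‖ₑ) (μ.restrict B) :=
    (hu.continuousOn.sub continuousOn_const).enorm.aemeasurable hB.measurableSet
  calc ‖u x - u y‖ₑ = ⨍⁻ _ in B, ‖u x - u y‖ₑ ∂μ :=
        (setLAverage_const (hB.measure_pos μ ⟨x, hx⟩).ne' hμB _).symm
    _ ≤ ⨍⁻ w in B, (‖u w - u x‖ₑ + ‖u w - u y‖ₑ) ∂μ := by
        refine lintegral_mono fun w => ?_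
        simpa only [edist_eq_enorm_sub] using edist_triangle_left (u x) (u y) (u w)
    _ = ⨍⁻ w in B, ‖u w - u x‖ₑ ∂μ + ⨍⁻ w in B, ‖u w - u y‖ₑ ∂μ :=
        lintegral_add_left' (hmeas.smul_measure _) _
    _ ≤ _ := by
        rw [mul_assoc, mul_assoc, two_mul, ← mul_assoc]
        exact add_le_add
          (setLAverage_enorm_sub_le_of_starConvex μ hB (hBc.starConvex hx) hx hu hq hdq)
          (setLAverage_enorm_sub_le_of_starConvex μ hB (hBc.starConvex hy) hy hu hq hdq)

end Morrey

/-- The constant in Morrey's estimate on convex sets by the `δ`-dimensional Choquet integral. The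
first two factors come from Morrey's inequality with exponent `q = p n / δ`, for which `n / q` is
`δ / p`; the last one comes from comparing Lebesgue measure with the content. -/
noncomputable def choquetMorreyConst (n : ℕ) (δ p : ℝ) : ℝ≥0∞ :=
  2 * ENNReal.ofReal (1 - δ / p)⁻¹ *
    (ENNReal.ofReal (n / δ) * volume (ball (0 : EuclideanSpace ℝ (Fin n)) 1)) ^ (1 / (p * (n / δ)))

theorem choquetMorreyConst_ne_top (n : ℕ) {δ p : ℝ} (hδ : 0 ≤ δ) (hp : 0 ≤ p) :
    choquetMorreyConst n δ p ≠ ⊤ := by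
  have hω : volume (ball (0 : EuclideanSpace ℝ (Fin n)) 1) ≠ ⊤ := measure_ball_lt_top.ne
  exact ENNReal.mul_ne_top (ENNReal.mul_ne_top ENNReal.ofNat_ne_top ENNReal.ofReal_ne_top)
    (ENNReal.rpow_ne_top_of_nonneg (by positivity) (ENNReal.mul_ne_top ENNReal.ofReal_ne_top hω))

theorem stmt_10_general {F : Type*} [NormedAddCommGroup F] [NormedSpace ℝ F] {n : ℕ} {δ p : ℝ}
    (hδ : 0 < δ) (hδn : δ ≤ n) (hp : δ < p) {B : Set (EuclideanSpace ℝ (Fin n))} (hB : IsOpen B)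
    (hBc : Convex ℝ B) (hvol : volume B ≠ ⊤) {u : EuclideanSpace ℝ (Fin n) → F}
    (hu : ContDiffOn ℝ 1 u B) {x y : EuclideanSpace ℝ (Fin n)} (hx : x ∈ B) (hy : y ∈ B) :
    ‖u x - u y‖ₑ ≤
      choquetMorreyConst n δ p * ediam B *
        (choquet n δ B (fun v => ENNReal.ofReal (‖fderivWithin ℝ u B v‖ ^ p)) /
          volume B ^ (δ / (n : ℝ))) ^ (1 / p) := by
  have hn : 0 < (n : ℝ) := hδ.trans_le hδn
  have hp0 : 0 < p := hδ.trans hp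
  have hnq : (n : ℝ) < p * (n / δ) := by
    rw [← mul_div_assoc, lt_div_iff₀ hδ, mul_comm]
    gcongr
  have hq : 1 ≤ p * (n / δ) := (Nat.one_le_cast.2 (Nat.cast_pos.1 hn)).trans hnq.le
  have hratio : (n : ℝ) / (p * (n / δ)) = δ / p := by field_simp
  have hmorrey := enorm_sub_le_setLAverage_of_convex volume hB hBc hvol hu hq
    (by simpa using hnq) hx hy
  rw [finrank_euclideanSpace_fin, hratio] at hmorrey
  grw [hmorrey, rpow_setLAverage_enorm_rpow_le_choquet hδ hδn hp0
    ((hu.continuousOn_fderivWithin hB.uniqueDiffOn le_rfl).aestronglyMeasurable hB.measurableSet)]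
  unfold choquetMorreyConst
  exact le_of_eq (by ring)

theorem stmt_10 (n : ℕ) (hn : 2 ≤ n) (δ p : ℝ) (hδ : 0 < δ) (hδn : δ ≤ n) (hp : δ < p) :
    ∃ c : ℝ≥0∞, c ≠ ⊤ ∧
      ∀ (x : EuclideanSpace ℝ (Fin n)) (r : ℝ), 0 < r →
        ∀ u : EuclideanSpace ℝ (Fin n) → ℝ, ContDiffOn ℝ 1 u (ball x (2 * r)) →
          ∀ y ∈ ball x r,
            ENNReal.ofReal (|u x - u y|) ≤
              c * ENNReal.ofReal r *
                ((choquet n δ (ball x (2 * r))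
                    (fun v => ENNReal.ofReal (‖fderivWithin ℝ u (ball x (2 * r)) v‖ ^ p))) /
                  (volume (ball x (2 * r))) ^ (δ / (n : ℝ))) ^ (1 / p) := by
  refine ⟨choquetMorreyConst n δ p * 4, ENNReal.mul_ne_top
    (choquetMorreyConst_ne_top n hδ.le (hδ.trans hp).le) ENNReal.ofNat_ne_top,
    fun x r hr u hu y hy => ?_⟩
  have hdiam : ediam (ball x (2 * r)) ≤ 4 * ENNReal.ofReal r := by
    refine (ediam_ball_le x (2 * r)).trans_eq ?_
    rw [ENNReal.ofReal_mul zero_le_two, ENNReal.ofReal_ofNat, ← mul_assoc]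
    norm_num
  rw [← Real.norm_eq_abs, ofReal_norm, mul_assoc _ 4]
  grw [← hdiam]
  exact stmt_10_general hδ hδn hp isOpen_ball (convex_ball x (2 * r)) measure_ball_lt_top.ne hu
    (mem_ball_self (by positivity)) (ball_subset_ball (by linarith) hy)
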